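/- Let n ≥ 2, p > n and 1 ≤ q < p. There exist constants Θ = Θ(n,p,q) ≥ 0 and C = C(n,p,q) > 0 such that for every bounded domain Ω ⊂ ℝⁿ containing the origin, every u ∈ C_c^∞(Ω \ {0}), every open ball B_r ⊂ ℝⁿ of radius r ∈ (0, diam(Ω)), and every D ≥ e^Θ · diam(Ω), one has r^{n/p} · X^{1/p}(r/D) · ( (1/(ω_n rⁿ)) ∫_{B_r} |u(x)|^q / |x|^q dx )^{1/q} ≤ C · ( ∫_Ω |∇u|^p dx − ((p−n)/p)^p ∫_Ω |u|^p/|x|^p dx )^{1/p}, where u is extended by zero outside Ω. -/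

import Mathlib

open MeasureTheory Metric Set

/-!
Write `H = (p - n) / p` and `X(t) = (1 - log t)⁻¹`, so that `X' = X² / t`. Along a ray, let `f` be
the restriction of `u`. For every solution `φ` of the Riccati equation `φ' = φ² / t`, the function
`t^(-pH) |f|^p H^(p-2) (H - (2/p) φ)` has derivative at most
`t^(p-1-pH) (|f'|^p - H^p |f|^p / t^p)`, because the Riccati term absorbs the quadratic remainder of
the convexity inequality for `|·|^p`. Taking `φ = 0` on `[0, s]` and `φ = X(t / R)` on `[s, R]`
bounds `|f(s)|^p s^(-pH) X(s / R)` by the Hardy deficit of the ray. Integrating this pointwise bound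
against the radial weight `min(1, |x| / r)^ε` cut off to the annulus `||x| - |c|| < r`, first in `s`
and then over the sphere, costs only a factor `1 / X(r / R)`, since the extra power of `s / r`
absorbs the logarithm. Hölder's inequality finally trades the weighted `L^p` norm on `B_r(c)` for
the `L^q` average.
-/

/-- The logarithmic weight `X(t) = (1 - log t)⁻¹` on `(0, 1]`. -/
noncomputable def hardyX (t : ℝ) : ℝ := (1 - Real.log t)⁻¹

lemma hardyX_pos {t : ℝ} (h0 : 0 ≤ t) (h1 : t ≤ 1) : 0 < hardyX t :=
  inv_pos.2 (by linarith [Real.log_nonpos h0 h1])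

lemma hasDerivAt_hardyX_div {t R : ℝ} (ht : 0 < t) (htR : t ≤ R) :
    HasDerivAt (fun s ↦ hardyX (s / R)) (hardyX (t / R) ^ 2 / t) t := by
  have hR : 0 < R := ht.trans_le htR
  have hX : 1 - Real.log (t / R) ≠ 0 :=
    (inv_pos.1 (hardyX_pos (div_pos ht hR).le (div_le_one_of_le₀ htR hR.le))).ne'
  have hlog := ((hasDerivAt_id t).div_const R).log (div_pos ht hR).ne'
  refine ((hlog.const_sub 1).inv hX).congr_deriv ?_
  simp only [hardyX, id_eq]
  field_simp

lemma min_one_div_rpow_mul_hardyX_le {s t δ : ℝ} (hδ : 0 < δ) (hs : 0 < s) (hs1 : s ≤ 1)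
    (ht : 0 < t) (ht1 : t ≤ 1) :
    min 1 (s / t) ^ δ * hardyX t ≤ (1 + δ⁻¹) * hardyX s := by
  have hLs : 1 ≤ 1 - Real.log s := by linarith [Real.log_nonpos hs.le hs1]
  have hLt : 1 ≤ 1 - Real.log t := by linarith [Real.log_nonpos ht.le ht1]
  suffices h : min 1 (s / t) ^ δ * (1 - Real.log s) ≤ (1 + δ⁻¹) * (1 - Real.log t) by
    rw [hardyX, hardyX, ← div_eq_mul_inv, ← div_eq_mul_inv, div_le_div_iff₀ (by linarith)
      (by linarith)]
    exact h
  rcases le_total s t with hst | hts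
  · have hm1 : (s / t) ^ δ ≤ 1 :=
      Real.rpow_le_one (by positivity) (div_le_one_of_le₀ hst ht.le) hδ.le
    have hlog : (s / t) ^ δ * Real.log (t / s) ≤ δ⁻¹ := calc
      (s / t) ^ δ * Real.log (t / s) ≤ (s / t) ^ δ * ((t / s) ^ δ / δ) := by
        gcongr
        exact Real.log_le_rpow_div (by positivity) hδ
      _ = δ⁻¹ := by
        rw [← inv_div s t, Real.inv_rpow (by positivity)]
        field_simp
    rw [Real.log_div ht.ne' hs.ne'] at hlog
    calc min 1 (s / t) ^ δ * (1 - Real.log s)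
        = (s / t) ^ δ * (1 - Real.log t) + (s / t) ^ δ * (Real.log t - Real.log s) := by
          rw [min_eq_right (div_le_one_of_le₀ hst ht.le)]; ring
      _ ≤ 1 * (1 - Real.log t) + δ⁻¹ * 1 := by
          rw [mul_one]
          gcongr
      _ ≤ (1 + δ⁻¹) * (1 - Real.log t) := by
          rw [add_mul]
          gcongr
  · rw [min_eq_left ((one_le_div ht).2 hts), Real.one_rpow]
    have : Real.log t ≤ Real.log s := Real.log_le_log ht hts
    gcongr
    simpa using hδ.le

lemma abs_rpow_sub_two_mul_sq {p : ℝ} (hp : p ≠ 0) (a : ℝ) :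
    |a| ^ (p - 2) * a ^ 2 = |a| ^ p := by
  rw [← sq_abs, ← Real.rpow_natCast, ← Real.rpow_add' (abs_nonneg a) (by simpa)]
  norm_num

lemma abs_rpow_sub_two_mul_sq_le {p : ℝ} (hp : 2 ≤ p) (a b : ℝ) :
    |a| ^ (p - 2) * b ^ 2 ≤ (1 - 2 / p) * |a| ^ p + 2 / p * |b| ^ p := by
  have hp0 : 0 < p := by linarith
  have young := Real.geom_mean_le_arith_mean2_weighted
    (sub_nonneg.2 (div_le_one_of_le₀ hp hp0.le)) (by positivity : 0 ≤ 2 / p)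
    (Real.rpow_nonneg (abs_nonneg a) p) (Real.rpow_nonneg (abs_nonneg b) p) (by ring)
  rwa [← Real.rpow_mul (abs_nonneg a), ← Real.rpow_mul (abs_nonneg b),
    mul_div_cancel₀ _ hp0.ne', mul_sub, mul_one, mul_div_cancel₀ _ hp0.ne', Real.rpow_two,
    sq_abs] at young

lemma riccati_le_abs_rpow_sub {p H : ℝ} (hp : 2 ≤ p) (hH : 0 < H) (φ a b : ℝ) :
    H ^ (p - 2) * |a| ^ (p - 2) *
        ((H - 2 / p * φ) * (p * (a * b - H * a ^ 2)) - 2 / p * φ ^ 2 * a ^ 2) ≤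
      |b| ^ p - H ^ p * |a| ^ p := by
  have hp0 : 0 < p := by linarith
  have young := abs_rpow_sub_two_mul_sq_le hp (H * a) b
  have split := abs_rpow_sub_two_mul_sq hp0.ne' (H * a)
  rw [abs_mul, abs_of_pos hH, Real.mul_rpow hH.le (abs_nonneg a),
    Real.mul_rpow hH.le (abs_nonneg a)] at young split
  set A := H ^ (p - 2) * |a| ^ (p - 2)
  calc A * ((H - 2 / p * φ) * (p * (a * b - H * a ^ 2)) - 2 / p * φ ^ 2 * a ^ 2)
      = p / 2 * (A * b ^ 2) - p / 2 * (A * (H * a) ^ 2)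
          - p / 2 * (A * (b - H * a + 2 / p * φ * a) ^ 2) := by
        field_simp
        ring
    _ ≤ p / 2 * (A * b ^ 2) - p / 2 * (A * (H * a) ^ 2) := sub_le_self _ (by positivity)
    _ ≤ p / 2 * ((1 - 2 / p) * (H ^ p * |a| ^ p) + 2 / p * |b| ^ p)
          - p / 2 * (H ^ p * |a| ^ p) := by
        rw [split]
        gcongr
    _ = |b| ^ p - H ^ p * |a| ^ p := by
        field_simp
        ring

section HardyDensity

variable {E : Type*} [NormedAddCommGroup E] {u : E → ℝ} {H p R : ℝ}

lemma eq_zero_of_tsupport_subset_closedBall [NormedSpace ℝ E] (hu : Continuous u) (hR : R ≠ 0)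
    (huR : tsupport u ⊆ closedBall 0 R) {x : E} (hx : R ≤ ‖x‖) : u x = 0 := by
  by_contra hux
  have hsub : Function.support u ⊆ ball 0 R := by
    rw [← interior_closedBall _ hR]
    exact interior_maximal ((subset_tsupport u).trans huR) hu.isOpen_support
  exact hx.not_gt (mem_ball_zero_iff.1 (hsub hux))

lemma continuous_mul_rpow_norm (hu : Continuous u) (hu0 : (0 : E) ∉ tsupport u) (a : ℝ) :
    Continuous fun x ↦ u x * ‖x‖ ^ a := by
  refine ContinuousOn.continuous_of_tsupport_subset (s := {0}ᶜ) ?_ isOpen_compl_singleton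
    (tsupport_mul_subset_left.trans (subset_compl_singleton_iff.2 hu0))
  exact hu.continuousOn.mul
    (continuous_norm.continuousOn.rpow_const fun x hx ↦ .inl (norm_ne_zero_iff.2 hx))

lemma tsupport_abs_rpow (hp : p ≠ 0) : tsupport (fun x ↦ |u x| ^ p) = tsupport u := by
  simp [tsupport, Function.support, Real.rpow_eq_zero (abs_nonneg _) hp]

lemma continuous_abs_rpow_div_norm_rpow (hp : 0 < p) (hu : Continuous u)
    (hu0 : (0 : E) ∉ tsupport u) : Continuous fun x ↦ |u x| ^ p / ‖x‖ ^ p := by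
  simpa only [Real.rpow_neg (norm_nonneg _), div_eq_mul_inv] using
    continuous_mul_rpow_norm (hu.abs.rpow_const fun _ ↦ .inr hp.le)
      (tsupport_abs_rpow (u := u) hp.ne' ▸ hu0) (-p)

lemma integrable_abs_rpow_div_norm_rpow [MeasurableSpace E] [OpensMeasurableSpace E]
    {μ : Measure E} [IsFiniteMeasureOnCompacts μ] (hp : 0 < p) (hu : Continuous u)
    (hu0 : (0 : E) ∉ tsupport u) (huc : HasCompactSupport u) :
    Integrable (fun x ↦ |u x| ^ p / ‖x‖ ^ p) μ :=
  (continuous_abs_rpow_div_norm_rpow hp hu hu0).integrable_of_hasCompactSupport <|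
    huc.mono' fun x hx ↦ subset_tsupport u fun hux ↦ hx (by simp [hux, Real.zero_rpow hp.ne'])

variable [NormedSpace ℝ E]

/-- The integrand `|∇u|^p - H^p |u|^p / |x|^p` of the Hardy deficit. On `E = ℝ` it is the integrand
of the one-dimensional deficit along a ray. -/
noncomputable def hardyDensity (H p : ℝ) (u : E → ℝ) (x : E) : ℝ :=
  ‖fderiv ℝ u x‖ ^ p - H ^ p * (|u x| ^ p / ‖x‖ ^ p)

lemma hardyDensity_eq_zero (hp : p ≠ 0) {x : E} (hx : x ∉ tsupport u) :
    hardyDensity H p u x = 0 := by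
  simp [hardyDensity, fderiv_of_notMem_tsupport ℝ hx, image_eq_zero_of_notMem_tsupport hx,
    Real.zero_rpow hp]

lemma tsupport_hardyDensity_subset (hp : p ≠ 0) : tsupport (hardyDensity H p u) ⊆ tsupport u :=
  closure_minimal (fun _ hx ↦ by_contra fun hxu ↦ hx (hardyDensity_eq_zero hp hxu))
    (isClosed_tsupport u)

lemma continuous_hardyDensity (hp : 0 < p) (hu : ContDiff ℝ 1 u) (hu0 : (0 : E) ∉ tsupport u) :
    Continuous (hardyDensity H p u) :=
  ((hu.continuous_fderiv one_ne_zero).norm.rpow_const fun _ ↦ .inr hp.le).sub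
    ((continuous_abs_rpow_div_norm_rpow hp hu.continuous hu0).const_mul _)

lemma integrable_hardyDensity [MeasurableSpace E] [OpensMeasurableSpace E] {μ : Measure E}
    [IsFiniteMeasureOnCompacts μ] (hp : 0 < p) (hu : ContDiff ℝ 1 u) (hu0 : (0 : E) ∉ tsupport u)
    (huc : HasCompactSupport u) : Integrable (hardyDensity H p u) μ :=
  (continuous_hardyDensity hp hu hu0).integrable_of_hasCompactSupport
    (huc.of_isClosed_subset (isClosed_tsupport _) (tsupport_hardyDensity_subset hp.ne'))

lemma integral_hardyDensity_eq_setIntegral_sub [MeasurableSpace E] [OpensMeasurableSpace E]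
    {μ : Measure E} [IsFiniteMeasureOnCompacts μ] {Ω : Set E} (hp : 0 < p) (hu : ContDiff ℝ 1 u)
    (hu0 : (0 : E) ∉ tsupport u) (huc : HasCompactSupport u) (huΩ : tsupport u ⊆ Ω) :
    ∫ x, hardyDensity H p u x ∂μ =
      (∫ x in Ω, ‖fderiv ℝ u x‖ ^ p ∂μ) - H ^ p * ∫ x in Ω, |u x| ^ p / ‖x‖ ^ p ∂μ := by
  have hgrad : Integrable (fun x ↦ ‖fderiv ℝ u x‖ ^ p) μ :=
    ((hu.continuous_fderiv one_ne_zero).norm.rpow_const fun _ ↦ .inr hp.le)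
      |>.integrable_of_hasCompactSupport <| huc.mono' fun x hx ↦ by_contra fun hxu ↦ hx <| by
        simp [fderiv_of_notMem_tsupport ℝ hxu, Real.zero_rpow hp.ne']
  have hquot := integrable_abs_rpow_div_norm_rpow (μ := μ) hp hu.continuous hu0 huc
  rw [← integral_const_mul, ← integral_sub hgrad.integrableOn (hquot.const_mul _).integrableOn]
  exact (setIntegral_eq_integral_of_forall_compl_eq_zero fun x hx ↦
    hardyDensity_eq_zero hp.ne' fun hxu ↦ hx (huΩ hxu)).symm

end HardyDensity

section OneDimensional

variable {H p : ℝ}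

/-- The quantity `H^{p-2} (H - (2/p) φ(t)) |f(t)|^p t^{-pH}`, whose derivative lies below the
weighted Hardy deficit of `f` when `φ' = φ² / t`. -/
noncomputable def hardyCalibration (H p : ℝ) (f φ : ℝ → ℝ) (t : ℝ) : ℝ :=
  H ^ (p - 2) * ((H - 2 / p * φ t) * (|f t| ^ p * t ^ (-(p * H))))

lemma rpow_mul_hardyDensity {f : ℝ → ℝ} {f' t : ℝ} (ht : 0 < t)
    (hf : HasDerivAt f f' t) :
    t ^ (p - p * H - 1) * hardyDensity H p f t =
      t ^ (-(p * H) - 1) * (|t * f'| ^ p - H ^ p * |f t| ^ p) := by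
  have hnorm : ‖fderiv ℝ f t‖ = |f'| := by rw [← norm_deriv_eq_norm_fderiv, hf.deriv]; rfl
  rw [hardyDensity, hnorm, Real.norm_of_nonneg ht.le, abs_mul, abs_of_pos ht,
    Real.mul_rpow ht.le (abs_nonneg _), show p - p * H - 1 = -(p * H) - 1 + p by ring,
    Real.rpow_add ht]
  field_simp

lemma hasDerivAt_hardyCalibration {f φ : ℝ → ℝ} {f' t : ℝ} (hp : 1 < p) (ht : 0 < t)
    (hf : HasDerivAt f f' t) (hφ : HasDerivAt φ (φ t ^ 2 / t) t) :
    HasDerivAt (hardyCalibration H p f φ)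
      (t ^ (-(p * H) - 1) * (H ^ (p - 2) * |f t| ^ (p - 2) *
        ((H - 2 / p * φ t) * (p * (f t * (t * f') - H * f t ^ 2)) -
          2 / p * φ t ^ 2 * f t ^ 2))) t := by
  have hpow := ((hasDerivAt_abs_rpow (f t) hp).comp t hf).mul
    (Real.hasDerivAt_rpow_const (p := -(p * H)) (.inl ht.ne'))
  refine ((((hφ.const_mul (2 / p)).const_sub H).mul hpow).const_mul (H ^ (p - 2))).congr_deriv ?_
  have hsplit : t ^ (-(p * H)) = t ^ (-(p * H) - 1) * t := by
    rw [← Real.rpow_add_one ht.ne', sub_add_cancel]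
  simp only [Function.comp_apply, Pi.mul_apply]
  rw [← abs_rpow_sub_two_mul_sq (by linarith : p ≠ 0) (f t), hsplit]
  field_simp
  ring

lemma continuousOn_rpow_mul_hardyDensity {f : ℝ → ℝ} (hp : 0 < p) (hf : ContDiff ℝ 1 f)
    (hf0 : (0 : ℝ) ∉ tsupport f) (a : ℝ) :
    ContinuousOn (fun t ↦ t ^ a * hardyDensity H p f t) (Ici 0) := by
  refine (continuous_mul_rpow_norm (u := hardyDensity H p f) (continuous_hardyDensity hp hf hf0)
    (fun h ↦ hf0 (tsupport_hardyDensity_subset hp.ne' h)) a).continuousOn.congr fun t ht ↦ ?_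
  simp [abs_of_nonneg (mem_Ici.1 ht), mul_comm]

lemma hardyCalibration_sub_le_integral {f φ : ℝ → ℝ} {a b : ℝ} (hp : 2 ≤ p) (hH : 0 < H)
    (hf : ContDiff ℝ 1 f) (hf0 : (0 : ℝ) ∉ tsupport f) (ha : 0 ≤ a) (hab : a ≤ b)
    (hφc : ContinuousOn φ (Icc a b)) (hφ : ∀ t ∈ Ioo a b, HasDerivAt φ (φ t ^ 2 / t) t) :
    hardyCalibration H p f φ b - hardyCalibration H p f φ a ≤
      ∫ t in a..b, t ^ (p - p * H - 1) * hardyDensity H p f t := by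
  have hp0 : 0 < p := by linarith
  have habs_tsupport : tsupport (fun t ↦ |f t| ^ p) = tsupport f := tsupport_abs_rpow hp0.ne'
  have hweight := continuous_mul_rpow_norm (hf.continuous.abs.rpow_const fun _ ↦ .inr hp0.le)
    (habs_tsupport ▸ hf0) (-(p * H))
  have hcalib : ContinuousOn (hardyCalibration H p f φ) (Icc a b) := by
    refine (((continuousOn_const (c := H)).sub (hφc.const_mul (2 / p))).mul
      hweight.continuousOn).const_mul (H ^ (p - 2)) |>.congr fun t ht ↦ ?_
    simp [hardyCalibration, abs_of_nonneg (ha.trans ht.1)]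
  refine intervalIntegral.sub_le_integral_of_hasDeriv_right_of_le hab hcalib
    (fun t ht ↦ (hasDerivAt_hardyCalibration (by linarith) (ha.trans_lt ht.1)
      (hf.differentiable one_ne_zero t).hasDerivAt (hφ t ht)).hasDerivWithinAt)
    ((continuousOn_rpow_mul_hardyDensity hp0 hf hf0 _).mono
      fun t ht ↦ ha.trans ht.1).integrableOn_Icc fun t ht ↦ ?_
  have ht0 : 0 < t := ha.trans_lt ht.1
  rw [rpow_mul_hardyDensity ht0 (hf.differentiable one_ne_zero t).hasDerivAt]
  gcongr
  exact riccati_le_abs_rpow_sub hp hH _ _ _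

lemma hardyX_mul_le_integral_hardyDensity {f : ℝ → ℝ} {s R : ℝ} (hp : 2 ≤ p) (hH : 0 < H)
    (hf : ContDiff ℝ 1 f) (hf0 : (0 : ℝ) ∉ tsupport f) (hfR : tsupport f ⊆ closedBall 0 R)
    (hs : 0 < s) (hsR : s ≤ R) :
    2 / p * H ^ (p - 2) * (hardyX (s / R) * (|f s| ^ p * s ^ (-(p * H)))) ≤
      ∫ t in Ioi 0, t ^ (p - p * H - 1) * hardyDensity H p f t := by
  have hR : 0 < R := hs.trans_le hsR
  have hp0 : 0 < p := by linarith
  -- The calibration with `φ = 0` on `[0, s]` and `φ = X(·/R)` on `[s, R]` vanishes at both ends,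
  -- and its jump at `s` is the left-hand side.
  have hinner := hardyCalibration_sub_le_integral (φ := 0) hp hH hf hf0 le_rfl hs.le
    continuousOn_const fun t _ ↦ by simp
  have houter := hardyCalibration_sub_le_integral (φ := fun t ↦ hardyX (t / R)) hp hH hf hf0 hs.le
    hsR (fun t ht ↦ (hasDerivAt_hardyX_div (hs.trans_le ht.1) ht.2).continuousAt.continuousWithinAt)
    fun t ht ↦ hasDerivAt_hardyX_div (hs.trans ht.1) ht.2.le
  have hfR0 : f R = 0 := eq_zero_of_tsupport_subset_closedBall hf.continuous hR.ne' hfR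
    (le_abs_self R)
  have hint {a b : ℝ} (ha : 0 ≤ a) (hab : a ≤ b) : IntervalIntegrable
      (fun t ↦ t ^ (p - p * H - 1) * hardyDensity H p f t) volume a b :=
    ((continuousOn_rpow_mul_hardyDensity hp0 hf hf0 _).mono fun t ht ↦
      ha.trans ht.1).intervalIntegrable_of_Icc hab
  have hsupp : ∫ t in Ioi 0, t ^ (p - p * H - 1) * hardyDensity H p f t =
      ∫ t in 0..R, t ^ (p - p * H - 1) * hardyDensity H p f t := by
    rw [intervalIntegral.integral_of_le hR.le]
    refine setIntegral_eq_of_subset_of_forall_sdiff_eq_zero measurableSet_Ioi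
      Ioc_subset_Ioi_self fun t ht ↦ ?_
    rw [hardyDensity_eq_zero hp0.ne' fun h ↦ ht.2 ⟨ht.1, ?_⟩, mul_zero]
    exact (le_abs_self t).trans (mem_closedBall_zero_iff.1 (hfR h))
  rw [hsupp, ← intervalIntegral.integral_add_adjacent_intervals (hint le_rfl hs.le)
    (hint hs.le hsR)]
  refine le_trans (le_of_eq ?_) (add_le_add hinner houter)
  simp only [hardyCalibration, hfR0, image_eq_zero_of_notMem_tsupport hf0, abs_zero,
    Real.zero_rpow hp0.ne', Pi.zero_apply]
  ring

end OneDimensional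

section PolarCoordinates

lemma integral_volumeIoiPow (m : ℕ) (g : ℝ → ℝ) :
    ∫ t : Ioi (0 : ℝ), g t ∂.volumeIoiPow m = ∫ t in Ioi 0, t ^ m * g t := by
  simp only [Measure.volumeIoiPow, ENNReal.ofReal]
  rw [integral_withDensity_eq_integral_smul (measurable_subtype_coe.pow_const _).real_toNNReal,
    integral_subtype_comap measurableSet_Ioi fun t ↦ Real.toNNReal (t ^ m) • g t]
  refine setIntegral_congr_fun measurableSet_Ioi fun t (ht : 0 < t) ↦ ?_
  simp [NNReal.smul_def, ht.le]

variable {E : Type*} [NormedAddCommGroup E] [NormedSpace ℝ E] [MeasurableSpace E] [BorelSpace E]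

lemma measurableEmbedding_smul_sphere_Ioi [FiniteDimensional ℝ E] :
    MeasurableEmbedding fun z : sphere (0 : E) 1 × Ioi (0 : ℝ) ↦ (z.2 : ℝ) • (z.1 : E) :=
  (MeasurableEmbedding.subtype_coe (measurableSet_singleton (0 : E)).compl).comp
    (homeomorphUnitSphereProd E).symm.measurableEmbedding

variable [FiniteDimensional ℝ E] [Nontrivial E] {μ : Measure E} [μ.IsAddHaarMeasure]

lemma measurePreserving_smul_sphere_Ioi :
    MeasurePreserving (fun z : sphere (0 : E) 1 × Ioi (0 : ℝ) ↦ (z.2 : ℝ) • (z.1 : E))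
      (μ.toSphere.prod (.volumeIoiPow (Module.finrank ℝ E - 1))) μ := by
  have hcoe := measurePreserving_subtype_coe (μa := μ) (measurableSet_singleton (0 : E)).compl
  rw [restrict_compl_singleton] at hcoe
  exact hcoe.comp (μ.measurePreserving_homeomorphUnitSphereProd.symm
    (homeomorphUnitSphereProd E).toMeasurableEquiv)

lemma integrable_comp_smul_sphere_Ioi {F : E → ℝ} (hF : Integrable F μ) :
    Integrable (fun z : sphere (0 : E) 1 × Ioi (0 : ℝ) ↦ F ((z.2 : ℝ) • (z.1 : E)))
      (μ.toSphere.prod (.volumeIoiPow (Module.finrank ℝ E - 1))) :=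
  (measurePreserving_smul_sphere_Ioi.integrable_comp_emb measurableEmbedding_smul_sphere_Ioi).2 hF

lemma integrable_integral_ray {F : E → ℝ} (hF : Integrable F μ) :
    Integrable (fun σ : sphere (0 : E) 1 ↦
      ∫ t in Ioi (0 : ℝ), t ^ (Module.finrank ℝ E - 1) * F (t • (σ : E))) μ.toSphere :=
  (integrable_comp_smul_sphere_Ioi hF).integral_prod_left.congr
    (.of_forall fun σ ↦ integral_volumeIoiPow _ fun t ↦ F (t • (σ : E)))

lemma integral_eq_integral_sphere_integral_ray {F : E → ℝ} (hF : Integrable F μ) :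
    ∫ x, F x ∂μ = ∫ σ : sphere (0 : E) 1,
      (∫ t in Ioi (0 : ℝ), t ^ (Module.finrank ℝ E - 1) * F (t • (σ : E))) ∂μ.toSphere := by
  rw [← measurePreserving_smul_sphere_Ioi.integral_comp measurableEmbedding_smul_sphere_Ioi F,
    integral_prod _ (integrable_comp_smul_sphere_Ioi hF)]
  exact integral_congr_ae (.of_forall fun σ ↦ integral_volumeIoiPow _ fun t ↦ F (t • (σ : E)))

lemma integral_mono_of_forall_ray {F G : E → ℝ} (hF : Integrable F μ) (hG : Integrable G μ)
    (h : ∀ σ : E, ‖σ‖ = 1 → ∫ t in Ioi (0 : ℝ), t ^ (Module.finrank ℝ E - 1) * F (t • σ) ≤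
      ∫ t in Ioi (0 : ℝ), t ^ (Module.finrank ℝ E - 1) * G (t • σ)) :
    ∫ x, F x ∂μ ≤ ∫ x, G x ∂μ := by
  rw [integral_eq_integral_sphere_integral_ray hF, integral_eq_integral_sphere_integral_ray hG]
  exact integral_mono (integrable_integral_ray hF) (integrable_integral_ray hG)
    fun σ ↦ h σ (norm_eq_of_mem_sphere σ)

end PolarCoordinates

section RadialWeight

variable {E : Type*} [NormedAddCommGroup E] [NormedSpace ℝ E] {H p R : ℝ} {u : E → ℝ} {σ : E}

lemma tsupport_ray_subset (hσ : ‖σ‖ = 1) (huR : tsupport u ⊆ closedBall 0 R) :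
    tsupport (fun t : ℝ ↦ u (t • σ)) ⊆ closedBall 0 R := fun t ht ↦ by
  have := huR (tsupport_comp_subset_preimage u (by fun_prop : Continuous fun t : ℝ ↦ t • σ) ht)
  simpa [norm_smul, hσ] using this

lemma hardyDensity_ray_le (hp : 0 ≤ p) (hσ : ‖σ‖ = 1) (hu : Differentiable ℝ u) (t : ℝ) :
    hardyDensity H p (fun s : ℝ ↦ u (s • σ)) t ≤ hardyDensity H p u (t • σ) := by
  have hderiv : HasDerivAt (fun s : ℝ ↦ u (s • σ)) (fderiv ℝ u (t • σ) σ) t := by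
    simpa [Function.comp_def] using
      (hu (t • σ)).hasFDerivAt.comp_hasDerivAt t ((hasDerivAt_id t).smul_const σ)
  have hle : ‖fderiv ℝ (fun s : ℝ ↦ u (s • σ)) t‖ ≤ ‖fderiv ℝ u (t • σ)‖ := by
    rw [← norm_deriv_eq_norm_fderiv, hderiv.deriv]
    simpa [hσ] using (fderiv ℝ u (t • σ)).le_opNorm σ
  rw [hardyDensity, hardyDensity, norm_smul, hσ, mul_one]
  gcongr

lemma integrable_pow_mul_of_tsupport_subset {g : ℝ → ℝ} (hg : Continuous g)
    (hgR : tsupport g ⊆ closedBall 0 R) (m : ℕ) : Integrable fun t ↦ t ^ m * g t :=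
  ((continuous_pow m).mul hg).integrable_of_hasCompactSupport <|
    HasCompactSupport.mul_left <|
      (isCompact_closedBall 0 R).of_isClosed_subset (isClosed_tsupport g) hgR

lemma hardyX_mul_le_integral_hardyDensity_ray {m : ℕ} {s : ℝ} (hp : 2 ≤ p) (hH : 0 < H)
    (hm : p * H = p - (m + 1)) (hu : ContDiff ℝ 1 u) (hu0 : (0 : E) ∉ tsupport u)
    (huR : tsupport u ⊆ closedBall 0 R) (hσ : ‖σ‖ = 1) (hs : 0 < s) (hsR : s ≤ R) :
    2 / p * H ^ (p - 2) * (hardyX (s / R) * (|u (s • σ)| ^ p * s ^ (-(p * H)))) ≤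
      ∫ t in Ioi (0 : ℝ), t ^ m * hardyDensity H p u (t • σ) := by
  have hp0 : 0 < p := by linarith
  have hray : Continuous fun t : ℝ ↦ t • σ := by fun_prop
  have hf : ContDiff ℝ 1 fun t : ℝ ↦ u (t • σ) := hu.comp (contDiff_id.smul contDiff_const)
  have hf0 : (0 : ℝ) ∉ tsupport fun t : ℝ ↦ u (t • σ) := fun h ↦ hu0 <| by
    simpa using tsupport_comp_subset_preimage u hray h
  have hfR := tsupport_ray_subset hσ huR
  have hweight : p - p * H - 1 = (m : ℝ) := by linarith
  refine (hardyX_mul_le_integral_hardyDensity hp hH hf hf0 hfR hs hsR).trans ?_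
  simp only [hweight, Real.rpow_natCast]
  refine setIntegral_mono_on
    (integrable_pow_mul_of_tsupport_subset (continuous_hardyDensity hp0 hf hf0)
      ((tsupport_hardyDensity_subset hp0.ne').trans hfR) m).integrableOn
    (integrable_pow_mul_of_tsupport_subset ((continuous_hardyDensity hp0 hu hu0).comp hray)
      (tsupport_ray_subset hσ ((tsupport_hardyDensity_subset hp0.ne').trans huR)) m).integrableOn
    measurableSet_Ioi fun t (ht : 0 < t) ↦ ?_
  gcongr
  exact hardyDensity_ray_le hp0.le hσ (hu.differentiable one_ne_zero) t

lemma integral_ray_radial_weight_le {m : ℕ} {w : ℝ → ℝ} (hp : 2 ≤ p) (hH : 0 < H)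
    (hm : p * H = p - (m + 1)) (hR : 0 < R) (hu : ContDiff ℝ 1 u) (hu0 : (0 : E) ∉ tsupport u)
    (huR : tsupport u ⊆ closedBall 0 R) (hσ : ‖σ‖ = 1) (hw : ∀ t, 0 ≤ w t)
    (hwi : IntegrableOn (fun t ↦ w t / (t * hardyX (t / R))) (Ioc 0 R)) :
    2 / p * H ^ (p - 2) * ∫ t in Ioi (0 : ℝ), t ^ m * (w t * (|u (t • σ)| ^ p / t ^ p)) ≤
      (∫ t in Ioc 0 R, w t / (t * hardyX (t / R))) *
        ∫ t in Ioi (0 : ℝ), t ^ m * hardyDensity H p u (t • σ) := by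
  have hp0 : 0 < p := by linarith
  have hsupp : ∫ t in Ioi (0 : ℝ), t ^ m * (w t * (|u (t • σ)| ^ p / t ^ p)) =
      ∫ t in Ioc 0 R, t ^ m * (w t * (|u (t • σ)| ^ p / t ^ p)) := by
    refine setIntegral_eq_of_subset_of_forall_sdiff_eq_zero measurableSet_Ioi
      Ioc_subset_Ioi_self fun t ht ↦ ?_
    have htR : R ≤ ‖t • σ‖ := by
      rw [norm_smul, hσ, mul_one]
      exact (not_le.1 fun h ↦ ht.2 ⟨ht.1, h⟩).le.trans (le_abs_self t)
    simp [eq_zero_of_tsupport_subset_closedBall hu.continuous hR.ne' huR htR,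
      Real.zero_rpow hp0.ne']
  rw [hsupp, ← integral_const_mul, ← integral_mul_const]
  refine integral_mono_of_nonneg ?_ (hwi.mul_const _) ?_ <;>
    filter_upwards [ae_restrict_mem measurableSet_Ioc] with t ⟨ht, htR⟩
  · have := hw t
    positivity
  · have hX : 0 < hardyX (t / R) := hardyX_pos (by positivity) (div_le_one_of_le₀ htR hR.le)
    have hpow : t ^ m / t ^ p = t ^ (-(p * H)) / t := by
      rw [← Real.rpow_natCast, ← Real.rpow_sub ht, ← Real.rpow_sub_one ht.ne', hm]
      ring_nf
    calc 2 / p * H ^ (p - 2) * (t ^ m * (w t * (|u (t • σ)| ^ p / t ^ p)))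
        = 2 / p * H ^ (p - 2) * (t ^ m / t ^ p * (w t * |u (t • σ)| ^ p)) := by ring
      _ = w t / (t * hardyX (t / R)) *
          (2 / p * H ^ (p - 2) * (hardyX (t / R) * (|u (t • σ)| ^ p * t ^ (-(p * H))))) := by
        rw [hpow]
        field_simp
      _ ≤ _ := mul_le_mul_of_nonneg_left
        (hardyX_mul_le_integral_hardyDensity_ray hp hH hm hu hu0 huR hσ ht htR)
        (div_nonneg (hw t) (by positivity))

variable [FiniteDimensional ℝ E] [Nontrivial E] [MeasurableSpace E] [BorelSpace E]
  {μ : Measure E} [μ.IsAddHaarMeasure]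

theorem integral_hardyDensity_nonneg (hp : 2 ≤ p) (hH : 0 < H)
    (hHp : p * H = p - Module.finrank ℝ E) (hR : 0 < R) (hu : ContDiff ℝ 1 u)
    (hu0 : (0 : E) ∉ tsupport u) (huR : tsupport u ⊆ closedBall 0 R) :
    0 ≤ ∫ x, hardyDensity H p u x ∂μ := by
  have huc : HasCompactSupport u :=
    (isCompact_closedBall 0 R).of_isClosed_subset (isClosed_tsupport u) huR
  have hm : p * H = p - ((Module.finrank ℝ E - 1 : ℕ) + 1) := by
    rw [hHp, Nat.cast_pred Module.finrank_pos, sub_add_cancel]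
  have hX : 0 < hardyX (R / R) := hardyX_pos (by positivity) (div_self_le_one R)
  rw [← integral_zero E ℝ (μ := μ)]
  refine integral_mono_of_forall_ray (integrable_zero _ _ _)
    (integrable_hardyDensity (by linarith) hu hu0 huc) fun σ hσ ↦ ?_
  simp only [mul_zero, integral_zero]
  exact (by positivity : (0 : ℝ) ≤ _).trans
    (hardyX_mul_le_integral_hardyDensity_ray hp hH hm hu hu0 huR hσ hR le_rfl)

theorem integral_radial_weight_le {w : ℝ → ℝ} (hp : 2 ≤ p) (hH : 0 < H)
    (hHp : p * H = p - Module.finrank ℝ E) (hR : 0 < R) (hu : ContDiff ℝ 1 u)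
    (hu0 : (0 : E) ∉ tsupport u) (huR : tsupport u ⊆ closedBall 0 R) (hw : ∀ t, 0 ≤ w t)
    (hwi : IntegrableOn (fun t ↦ w t / (t * hardyX (t / R))) (Ioc 0 R))
    (hwu : Integrable (fun x ↦ w ‖x‖ * (|u x| ^ p / ‖x‖ ^ p)) μ) :
    2 / p * H ^ (p - 2) * ∫ x, w ‖x‖ * (|u x| ^ p / ‖x‖ ^ p) ∂μ ≤
      (∫ t in Ioc 0 R, w t / (t * hardyX (t / R))) * ∫ x, hardyDensity H p u x ∂μ := by
  have huc : HasCompactSupport u :=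
    (isCompact_closedBall 0 R).of_isClosed_subset (isClosed_tsupport u) huR
  have hm : p * H = p - ((Module.finrank ℝ E - 1 : ℕ) + 1) := by
    rw [hHp, Nat.cast_pred Module.finrank_pos, sub_add_cancel]
  rw [← integral_const_mul, ← integral_const_mul]
  refine integral_mono_of_forall_ray (hwu.const_mul _)
    ((integrable_hardyDensity (by linarith) hu hu0 huc).const_mul _) fun σ hσ ↦ ?_
  simp only [mul_left_comm _ (2 / p * H ^ (p - 2)), mul_left_comm _ (∫ _ in Ioc 0 R, _),
    integral_const_mul]
  convert integral_ray_radial_weight_le hp hH hm hR hu hu0 huR hσ hw hwi using 2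
  refine setIntegral_congr_fun measurableSet_Ioi fun t (ht : 0 < t) ↦ ?_
  simp [norm_smul, hσ, abs_of_pos ht]

end RadialWeight

section TruncatedPower

variable {E : Type*} [NormedAddCommGroup E] {r s : ℝ}

lemma min_one_div_rpow_le (hr : 0 < r) (x : E) :
    min 1 (‖x‖ / r) ^ s ≤ 1 + (ball (0 : E) r).indicator (fun y ↦ (‖y‖ / r) ^ s) x := by
  by_cases hx : x ∈ ball 0 r
  · rw [indicator_of_mem hx, min_eq_right ((div_le_one hr).2 (mem_ball_zero_iff.1 hx).le)]
    exact le_add_of_nonneg_left zero_le_one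
  · have : r ≤ ‖x‖ := by simpa using hx
    simp [indicator_of_notMem hx, min_eq_left ((one_le_div hr).2 this)]

lemma pow_smul_div_rpow_eq {m : ℕ} {y : ℝ} (hr : 0 < r) (hy : 0 < y) :
    y ^ m • (y / r) ^ s = (r ^ s)⁻¹ * y ^ (m + s) := by
  rw [smul_eq_mul, Real.div_rpow hy.le hr.le, Real.rpow_add hy, Real.rpow_natCast]
  ring

variable [NormedSpace ℝ E] [FiniteDimensional ℝ E] [Nontrivial E]

lemma neg_one_lt_finrank_pred_add (hs : -(Module.finrank ℝ E : ℝ) < s) :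
    -1 < ((Module.finrank ℝ E - 1 : ℕ) : ℝ) + s := by
  rw [Nat.cast_pred Module.finrank_pos]
  linarith

variable [MeasurableSpace E] [BorelSpace E] {μ : Measure E} [μ.IsAddHaarMeasure]

lemma integrableOn_ball_norm_div_rpow (hr : 0 < r) (hs : -(Module.finrank ℝ E : ℝ) < s) :
    IntegrableOn (fun x : E ↦ (‖x‖ / r) ^ s) (ball 0 r) μ := by
  rw [integrableOn_fun_norm_addHaar μ (f := fun y ↦ (y / r) ^ s)]
  have hpow := (intervalIntegral.intervalIntegrable_rpow' (a := 0) (b := r)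
    (neg_one_lt_finrank_pred_add hs)).const_mul (r ^ s)⁻¹
  rw [intervalIntegrable_iff_integrableOn_Ioo_of_le hr.le] at hpow
  exact hpow.congr_fun (fun y hy ↦ (pow_smul_div_rpow_eq hr hy.1).symm) measurableSet_Ioo

lemma setIntegral_ball_norm_div_rpow (hr : 0 < r) (hs : -(Module.finrank ℝ E : ℝ) < s) :
    ∫ x in ball (0 : E) r, (‖x‖ / r) ^ s ∂μ =
      Module.finrank ℝ E / (Module.finrank ℝ E + s) * μ.real (ball 0 r) := by
  have hball : (ball (0 : E) r).indicator (fun x ↦ (‖x‖ / r) ^ s) =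
      fun x ↦ (Iio r).indicator (fun y ↦ (y / r) ^ s) ‖x‖ := by
    ext x
    simp [indicator]
  have hpow : ∫ y in Ioo 0 r, y ^ (Module.finrank ℝ E - 1) • (y / r) ^ s =
      r ^ Module.finrank ℝ E / (Module.finrank ℝ E + s) := by
    rw [setIntegral_congr_fun measurableSet_Ioo fun y hy ↦ pow_smul_div_rpow_eq hr hy.1,
      integral_const_mul, ← integral_Ioc_eq_integral_Ioo,
      ← intervalIntegral.integral_of_le hr.le,
      integral_rpow (.inl (neg_one_lt_finrank_pred_add hs)), Nat.cast_pred Module.finrank_pos,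
      show (Module.finrank ℝ E : ℝ) - 1 + s + 1 = Module.finrank ℝ E + s by ring,
      Real.zero_rpow (by linarith), sub_zero, Real.rpow_add hr, Real.rpow_natCast]
    field_simp
  rw [← integral_indicator measurableSet_ball, hball, integral_fun_norm_addHaar,
    ← indicator_smul, setIntegral_indicator measurableSet_Iio, Ioi_inter_Iio, hpow,
    ← Measure.addHaar_real_closedBall_eq_addHaar_real_ball μ 0 r,
    Measure.addHaar_real_closedBall μ 0 hr.le, nsmul_eq_mul, smul_eq_mul]
  ring

lemma integrableOn_min_one_div_rpow (hr : 0 < r) (hs : -(Module.finrank ℝ E : ℝ) < s) (c : E) :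
    IntegrableOn (fun x : E ↦ min 1 (‖x‖ / r) ^ s) (ball c r) μ := by
  have hone : IntegrableOn (fun _ : E ↦ (1 : ℝ)) (ball c r) μ :=
    integrableOn_const measure_ball_lt_top.ne
  have hind : Integrable ((ball 0 r).indicator fun x : E ↦ (‖x‖ / r) ^ s) μ :=
    (integrableOn_ball_norm_div_rpow hr hs).integrable_indicator measurableSet_ball
  have hmeas : Measurable fun x : E ↦ min 1 (‖x‖ / r) ^ s := by fun_prop
  refine (hone.add hind.integrableOn).mono' hmeas.aestronglyMeasurable (.of_forall fun x ↦ ?_)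
  rw [Real.norm_of_nonneg (by positivity)]
  exact min_one_div_rpow_le hr x

lemma setIntegral_ball_min_one_div_rpow_le (hr : 0 < r) (hs : -(Module.finrank ℝ E : ℝ) < s)
    (c : E) :
    ∫ x in ball c r, min 1 (‖x‖ / r) ^ s ∂μ ≤
      (1 + Module.finrank ℝ E / (Module.finrank ℝ E + s)) * μ.real (ball c r) := by
  have hone : IntegrableOn (fun _ : E ↦ (1 : ℝ)) (ball c r) μ :=
    integrableOn_const measure_ball_lt_top.ne
  have hind : Integrable ((ball 0 r).indicator fun x : E ↦ (‖x‖ / r) ^ s) μ :=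
    (integrableOn_ball_norm_div_rpow hr hs).integrable_indicator measurableSet_ball
  calc ∫ x in ball c r, min 1 (‖x‖ / r) ^ s ∂μ
      ≤ ∫ x in ball c r, (1 + (ball 0 r).indicator (fun y : E ↦ (‖y‖ / r) ^ s) x) ∂μ :=
        integral_mono (integrableOn_min_one_div_rpow hr hs c) (hone.add hind.integrableOn)
          fun x ↦ min_one_div_rpow_le hr x
    _ = μ.real (ball c r) +
          ∫ x in ball c r, (ball 0 r).indicator (fun y : E ↦ (‖y‖ / r) ^ s) x ∂μ := by
        rw [integral_add hone hind.integrableOn]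
        simp
    _ ≤ μ.real (ball c r) + ∫ x, (ball 0 r).indicator (fun y : E ↦ (‖y‖ / r) ^ s) x ∂μ := by
        refine add_le_add le_rfl (setIntegral_le_integral hind (.of_forall ?_))
        exact indicator_nonneg fun x _ ↦ by positivity
    _ = _ := by
        rw [integral_indicator measurableSet_ball, setIntegral_ball_norm_div_rpow hr hs,
          measureReal_def, measureReal_def, Measure.addHaar_ball_center μ c]
        ring

end TruncatedPower

section LocalWeight

variable {δ r R ρ : ℝ}

/-- The cut-off `1_{|t - ρ| < r} min(1, |t| / r) ^ ε`, a weight localizing radial integrals to an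
annulus. It damps the origin, where `1 / (t * hardyX t)` fails to be integrable. -/
noncomputable def annulusWeight (ε ρ r : ℝ) : ℝ → ℝ :=
  (ball ρ r).indicator fun t ↦ min 1 (‖t‖ / r) ^ ε

lemma annulusWeight_nonneg {ε : ℝ} (hr : 0 < r) (t : ℝ) : 0 ≤ annulusWeight ε ρ r t :=
  indicator_nonneg (fun _ _ ↦ by positivity) t

lemma measurable_annulusWeight {ε : ℝ} : Measurable (annulusWeight ε ρ r) :=
  Measurable.indicator (by fun_prop) measurableSet_ball

lemma annulusWeight_le_one {ε : ℝ} (hε : 0 ≤ ε) (hr : 0 < r) (t : ℝ) :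
    annulusWeight ε ρ r t ≤ 1 :=
  indicator_apply_le' (fun _ ↦ Real.rpow_le_one (by positivity) (min_le_left _ _) hε)
    fun _ ↦ zero_le_one

lemma min_one_div_rpow_div_mul_hardyX_le {t : ℝ} (hδ : 0 < δ) (hr : 0 < r) (hrR : r ≤ R)
    (ht : 0 < t) (htR : t ≤ R) :
    min 1 (t / r) ^ (2 * δ) / (t * hardyX (t / R)) ≤
      (1 + δ⁻¹) / (r * hardyX (r / R)) * min 1 (t / r) ^ (δ - 1) := by
  have hR : 0 < R := hr.trans_le hrR
  have hm : 0 < min 1 (t / r) := by positivity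
  have htX : 0 < hardyX (t / R) := hardyX_pos (by positivity) (div_le_one_of_le₀ htR hR.le)
  have hrX : 0 < hardyX (r / R) := hardyX_pos (by positivity) (div_le_one_of_le₀ hrR hR.le)
  have hlog : min 1 (t / r) ^ δ * hardyX (r / R) ≤ (1 + δ⁻¹) * hardyX (t / R) := by
    simpa [div_div_div_cancel_right₀ hR.ne'] using min_one_div_rpow_mul_hardyX_le hδ
      (div_pos ht hR) (div_le_one_of_le₀ htR hR.le) (div_pos hr hR) (div_le_one_of_le₀ hrR hR.le)
  have hmin : min 1 (t / r) * r ≤ t := (le_div_iff₀ hr).1 (min_le_right _ _)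
  have hsplit : min 1 (t / r) ^ (2 * δ) =
      min 1 (t / r) ^ δ * (min 1 (t / r) ^ (δ - 1) * min 1 (t / r)) := by
    rw [← Real.rpow_add_one hm.ne', ← Real.rpow_add hm]
    ring_nf
  rw [hsplit, div_mul_eq_mul_div, div_le_div_iff₀ (by positivity) (by positivity)]
  calc min 1 (t / r) ^ δ * (min 1 (t / r) ^ (δ - 1) * min 1 (t / r)) * (r * hardyX (r / R))
      = min 1 (t / r) ^ (δ - 1) *
          ((min 1 (t / r) ^ δ * hardyX (r / R)) * (min 1 (t / r) * r)) := by ring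
    _ ≤ min 1 (t / r) ^ (δ - 1) * (((1 + δ⁻¹) * hardyX (t / R)) * t) := by gcongr
    _ = _ := by ring

lemma annulusWeight_div_mul_hardyX_le {t : ℝ} (hδ : 0 < δ) (hr : 0 < r) (hrR : r ≤ R)
    (ht : t ∈ Ioc 0 R) :
    annulusWeight (2 * δ) ρ r t / (t * hardyX (t / R)) ≤
      (1 + δ⁻¹) / (r * hardyX (r / R)) *
        (ball ρ r).indicator (fun t ↦ min 1 (‖t‖ / r) ^ (δ - 1)) t := by
  by_cases htρ : t ∈ ball ρ r
  · simpa only [annulusWeight, indicator_of_mem htρ, Real.norm_of_nonneg ht.1.le] using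
      min_one_div_rpow_div_mul_hardyX_le hδ hr hrR ht.1 ht.2
  · simp [annulusWeight, indicator_of_notMem htρ]

lemma integrable_indicator_min_one_div_rpow (hδ : 0 < δ) (hr : 0 < r) :
    Integrable ((ball ρ r).indicator fun t : ℝ ↦ min 1 (‖t‖ / r) ^ (δ - 1)) :=
  (integrableOn_min_one_div_rpow hr (by simpa using hδ) ρ).integrable_indicator measurableSet_ball

lemma annulusWeight_div_mul_hardyX_nonneg {ε t : ℝ} (hr : 0 < r) (ht : t ∈ Ioc 0 R) :
    0 ≤ annulusWeight ε ρ r t / (t * hardyX (t / R)) :=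
  div_nonneg (annulusWeight_nonneg hr t) <| mul_nonneg ht.1.le <|
    (hardyX_pos (div_nonneg ht.1.le (ht.1.le.trans ht.2))
      (div_le_one_of_le₀ ht.2 (ht.1.le.trans ht.2))).le

lemma integrableOn_annulusWeight_div_mul_hardyX (hδ : 0 < δ) (hr : 0 < r) (hrR : r ≤ R) :
    IntegrableOn (fun t ↦ annulusWeight (2 * δ) ρ r t / (t * hardyX (t / R))) (Ioc 0 R) := by
  have hmeas : Measurable fun t : ℝ ↦ annulusWeight (2 * δ) ρ r t / (t * hardyX (t / R)) := by
    unfold hardyX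
    exact measurable_annulusWeight.div (by fun_prop)
  refine ((integrable_indicator_min_one_div_rpow (ρ := ρ) hδ hr).integrableOn.const_mul
    ((1 + δ⁻¹) / (r * hardyX (r / R)))).mono' hmeas.aestronglyMeasurable ?_
  filter_upwards [ae_restrict_mem measurableSet_Ioc] with t ht
  rw [Real.norm_of_nonneg (annulusWeight_div_mul_hardyX_nonneg hr ht)]
  exact annulusWeight_div_mul_hardyX_le hδ hr hrR ht

lemma integral_annulusWeight_div_mul_hardyX_le (hδ : 0 < δ) (hr : 0 < r) (hrR : r ≤ R) :
    ∫ t in Ioc 0 R, annulusWeight (2 * δ) ρ r t / (t * hardyX (t / R)) ≤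
      2 * (1 + δ⁻¹) ^ 2 / hardyX (r / R) := by
  have hR : 0 < R := hr.trans_le hrR
  have hrX : 0 < hardyX (r / R) := hardyX_pos (by positivity) (div_le_one_of_le₀ hrR hR.le)
  have hind := integrable_indicator_min_one_div_rpow (ρ := ρ) hδ hr
  have hball : ∫ t in ball ρ r, min 1 (‖t‖ / r) ^ (δ - 1) ≤ (1 + δ⁻¹) * (2 * r) := by
    simpa [hr.le] using setIntegral_ball_min_one_div_rpow_le (μ := volume) (s := δ - 1) hr
      (by simpa using hδ) ρ
  calc ∫ t in Ioc 0 R, annulusWeight (2 * δ) ρ r t / (t * hardyX (t / R))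
      ≤ ∫ t in Ioc 0 R, (1 + δ⁻¹) / (r * hardyX (r / R)) *
          (ball ρ r).indicator (fun t ↦ min 1 (‖t‖ / r) ^ (δ - 1)) t :=
        setIntegral_mono_on (integrableOn_annulusWeight_div_mul_hardyX hδ hr hrR)
          (hind.integrableOn.const_mul _) measurableSet_Ioc
          fun t ht ↦ annulusWeight_div_mul_hardyX_le hδ hr hrR ht
    _ ≤ (1 + δ⁻¹) / (r * hardyX (r / R)) * ∫ t in ball ρ r, min 1 (‖t‖ / r) ^ (δ - 1) := by
        rw [integral_const_mul, ← integral_indicator measurableSet_ball]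
        refine mul_le_mul_of_nonneg_left (setIntegral_le_integral hind (.of_forall ?_))
          (by positivity)
        exact indicator_nonneg fun _ _ ↦ by positivity
    _ ≤ (1 + δ⁻¹) / (r * hardyX (r / R)) * ((1 + δ⁻¹) * (2 * r)) := by gcongr
    _ = 2 * (1 + δ⁻¹) ^ 2 / hardyX (r / R) := by field_simp

variable {E : Type*} [NormedAddCommGroup E]

lemma indicator_ball_le_annulusWeight_norm {ε : ℝ} (hr : 0 < r) (c x : E) :
    (ball c r).indicator (fun x ↦ min 1 (‖x‖ / r) ^ ε) x ≤ annulusWeight ε ‖c‖ r ‖x‖ := by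
  refine indicator_apply_le' (fun hx ↦ ?_) fun _ ↦ annulusWeight_nonneg hr _
  have hxc : ‖x‖ ∈ ball ‖c‖ r := by
    rw [mem_ball, Real.dist_eq]
    exact (abs_norm_sub_norm_le x c).trans_lt (mem_ball_iff_norm.1 hx)
  rw [annulusWeight, indicator_of_mem hxc, norm_norm]

variable [NormedSpace ℝ E] [FiniteDimensional ℝ E] [Nontrivial E] [MeasurableSpace E]
  [BorelSpace E] {μ : Measure E} [μ.IsAddHaarMeasure] {H p : ℝ} {u : E → ℝ}

theorem setIntegral_ball_weight_le (hδ : 0 < δ) (hr : 0 < r) (hrR : r ≤ R) (hp : 2 ≤ p)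
    (hH : 0 < H) (hHp : p * H = p - Module.finrank ℝ E) (hu : ContDiff ℝ 1 u)
    (hu0 : (0 : E) ∉ tsupport u) (huR : tsupport u ⊆ closedBall 0 R) (c : E) :
    ∫ x in ball c r, min 1 (‖x‖ / r) ^ (2 * δ) * (|u x| ^ p / ‖x‖ ^ p) ∂μ ≤
      p * (1 + δ⁻¹) ^ 2 / (H ^ (p - 2) * hardyX (r / R)) * ∫ x, hardyDensity H p u x ∂μ := by
  have hp0 : 0 < p := by linarith
  have hR : 0 < R := hr.trans_le hrR
  have huc : HasCompactSupport u :=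
    (isCompact_closedBall 0 R).of_isClosed_subset (isClosed_tsupport u) huR
  have hD := integral_hardyDensity_nonneg (μ := μ) hp hH hHp hR hu hu0 huR
  have hrX : 0 < hardyX (r / R) := hardyX_pos (by positivity) (div_le_one_of_le₀ hrR hR.le)
  have hv : Integrable (fun x ↦ |u x| ^ p / ‖x‖ ^ p) μ :=
    integrable_abs_rpow_div_norm_rpow hp0 hu.continuous hu0 huc
  have hwu : Integrable (fun x ↦ annulusWeight (2 * δ) ‖c‖ r ‖x‖ * (|u x| ^ p / ‖x‖ ^ p)) μ :=
    hv.bdd_mul (c := 1) (measurable_annulusWeight.comp measurable_norm).aestronglyMeasurable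
      (.of_forall fun x ↦ by
        rw [Real.norm_of_nonneg (annulusWeight_nonneg hr _)]
        exact annulusWeight_le_one (by positivity) hr _)
  have hlocal : ∫ x in ball c r, min 1 (‖x‖ / r) ^ (2 * δ) * (|u x| ^ p / ‖x‖ ^ p) ∂μ ≤
      ∫ x, annulusWeight (2 * δ) ‖c‖ r ‖x‖ * (|u x| ^ p / ‖x‖ ^ p) ∂μ := by
    rw [← integral_indicator measurableSet_ball]
    refine integral_mono_of_nonneg (.of_forall (indicator_nonneg fun _ _ ↦ by positivity)) hwu
      (.of_forall fun x ↦ ?_)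
    rw [indicator_mul_left]
    exact mul_le_mul_of_nonneg_right (indicator_ball_le_annulusWeight_norm hr c x) (by positivity)
  have hradial := (integral_radial_weight_le hp hH hHp hR hu hu0 huR
    (annulusWeight_nonneg (ε := 2 * δ) (ρ := ‖c‖) hr)
    (integrableOn_annulusWeight_div_mul_hardyX hδ hr hrR) hwu).trans
    (mul_le_mul_of_nonneg_right (integral_annulusWeight_div_mul_hardyX_le hδ hr hrR) hD)
  rw [← le_div_iff₀' (by positivity)] at hradial
  refine hlocal.trans (hradial.trans_eq ?_)
  field_simp

end LocalWeight

section WeightedHolder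

variable {α : Type*} {m : MeasurableSpace α} {ν : Measure α} {p q : ℝ} {w v : α → ℝ}

lemma memLp_ofReal_of_integrable_rpow {f : α → ℝ} (hp : 0 < p) (hf0 : 0 ≤ᵐ[ν] f)
    (hfm : AEStronglyMeasurable f ν) (hf : Integrable (fun x ↦ f x ^ p) ν) :
    MemLp f (ENNReal.ofReal p) ν := by
  rw [← integrable_norm_rpow_iff hfm (by simpa using hp) ENNReal.ofReal_ne_top,
    ENNReal.toReal_ofReal hp.le]
  refine hf.congr ?_
  filter_upwards [hf0] with x hx
  rw [Real.norm_of_nonneg hx]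

theorem integral_abs_rpow_le_of_weight (hq : 0 < q) (hqp : q < p) (hw : ∀ᵐ x ∂ν, 0 < w x)
    (hwm : AEMeasurable w ν) (hvm : AEMeasurable v ν)
    (hwv : Integrable (fun x ↦ w x * |v x| ^ p) ν)
    (hwd : Integrable (fun x ↦ w x ^ (-(q / (p - q)))) ν) :
    ∫ x, |v x| ^ q ∂ν ≤ (∫ x, w x * |v x| ^ p ∂ν) ^ (q / p) *
      (∫ x, w x ^ (-(q / (p - q))) ∂ν) ^ (1 - q / p) := by
  have hp : 0 < p := hq.trans hqp
  have hconj : (p / q).HolderConjugate (p / (p - q)) :=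
    Real.holderConjugate_iff.2 ⟨(one_lt_div hq).2 hqp, by field_simp; ring⟩
  have hf : (fun x ↦ (w x ^ (q / p) * |v x| ^ q) ^ (p / q)) =ᵐ[ν] fun x ↦ w x * |v x| ^ p := by
    filter_upwards [hw] with x hwx
    rw [Real.mul_rpow (by positivity) (by positivity), ← Real.rpow_mul hwx.le,
      ← Real.rpow_mul (abs_nonneg _), div_mul_div_cancel₀ hp.ne', div_self hq.ne',
      mul_div_cancel₀ _ hq.ne', Real.rpow_one]
  have hg : (fun x ↦ (w x ^ (-(q / p))) ^ (p / (p - q))) =ᵐ[ν]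
      fun x ↦ w x ^ (-(q / (p - q))) := by
    filter_upwards [hw] with x hwx
    rw [← Real.rpow_mul hwx.le, neg_mul, div_mul_div_cancel₀ hp.ne']
  have hf0 : 0 ≤ᵐ[ν] fun x ↦ w x ^ (q / p) * |v x| ^ q := by
    filter_upwards [hw] with x hwx using by positivity
  have hg0 : 0 ≤ᵐ[ν] fun x ↦ w x ^ (-(q / p)) := by
    filter_upwards [hw] with x hwx using by positivity
  calc ∫ x, |v x| ^ q ∂ν
      = ∫ x, w x ^ (q / p) * |v x| ^ q * w x ^ (-(q / p)) ∂ν := by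
        refine integral_congr_ae ?_
        filter_upwards [hw] with x hwx
        rw [mul_right_comm, ← Real.rpow_add hwx, add_neg_cancel, Real.rpow_zero, one_mul]
    _ ≤ _ := integral_mul_le_Lp_mul_Lq_of_nonneg hconj hf0 hg0
      (memLp_ofReal_of_integrable_rpow (by positivity) hf0
        ((hwm.pow_const _).mul (hvm.abs.pow_const _)).aestronglyMeasurable (hwv.congr hf.symm))
      (memLp_ofReal_of_integrable_rpow (by positivity) hg0
        (hwm.pow_const _).aestronglyMeasurable (hwd.congr hg.symm))
    _ = _ := by
      rw [integral_congr_ae hf, integral_congr_ae hg, one_div_div, one_div_div, sub_div,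
        div_self hp.ne']

end WeightedHolder

section LocalAverage

variable {E : Type*} [NormedAddCommGroup E] [NormedSpace ℝ E] [FiniteDimensional ℝ E]
  [MeasurableSpace E] [BorelSpace E] {μ : Measure E} [μ.IsAddHaarMeasure] {p q r ε : ℝ}
  {v : E → ℝ}

lemma integrableOn_ball_min_one_div_rpow_mul (hε : 0 ≤ ε) (hr : 0 < r) (hv : Continuous v)
    (c : E) : IntegrableOn (fun x ↦ min 1 (‖x‖ / r) ^ ε * v x) (ball c r) μ := by
  have hmeas : Measurable fun x : E ↦ min 1 (‖x‖ / r) ^ ε := by fun_prop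
  refine ((hv.continuousOn.integrableOn_compact (isCompact_closedBall c r)).mono_set
    ball_subset_closedBall).bdd_mul (c := 1) hmeas.aestronglyMeasurable (.of_forall fun x ↦ ?_)
  rw [Real.norm_of_nonneg (by positivity)]
  exact Real.rpow_le_one (by positivity) (min_le_left _ _) hε

variable [Nontrivial E]

lemma measureReal_ball_eq_mul_pow (hr : 0 ≤ r) (c : E) :
    μ.real (ball c r) = μ.real (ball 0 1) * r ^ Module.finrank ℝ E := by
  rw [← Measure.addHaar_real_closedBall_eq_addHaar_real_ball μ c r,
    Measure.addHaar_real_closedBall μ c hr, mul_comm]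

lemma setAverage_ball_min_one_div_rpow_le {s : ℝ} (hr : 0 < r)
    (hs : -(Module.finrank ℝ E : ℝ) < s) (c : E) :
    ⨍ x in ball c r, min 1 (‖x‖ / r) ^ s ∂μ ≤
      1 + Module.finrank ℝ E / (Module.finrank ℝ E + s) := by
  have hball : 0 < μ.real (ball c r) :=
    ENNReal.toReal_pos (measure_ball_pos μ c hr).ne' measure_ball_lt_top.ne
  rw [setAverage_eq, smul_eq_mul, inv_mul_le_iff₀' hball]
  exact setIntegral_ball_min_one_div_rpow_le hr hs c

lemma setAverage_ball_abs_rpow_le_of_weight (hq : 0 < q) (hqp : q < p) (hr : 0 < r)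
    (hε : 0 ≤ ε) (hεn : ε * (q / (p - q)) < Module.finrank ℝ E) (hv : Continuous v) (c : E) :
    ⨍ x in ball c r, |v x| ^ q ∂μ ≤
      (⨍ x in ball c r, min 1 (‖x‖ / r) ^ ε * |v x| ^ p ∂μ) ^ (q / p) *
        (1 + Module.finrank ℝ E / (Module.finrank ℝ E - ε * (q / (p - q)))) ^ (1 - q / p) := by
  have hp : 0 < p := hq.trans hqp
  have hdual (x : E) : (min 1 (‖x‖ / r) ^ ε) ^ (-(q / (p - q))) =
      min 1 (‖x‖ / r) ^ (-(ε * (q / (p - q)))) := by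
    rw [← Real.rpow_mul (by positivity), mul_neg]
  have hw : ∀ᵐ x ∂μ.restrict (ball c r), 0 < min 1 (‖x‖ / r) ^ ε := by
    filter_upwards [ae_restrict_of_ae (Measure.ae_ne μ 0)] with x hx
    have := norm_pos_iff.2 hx
    positivity
  have hwv := integrableOn_ball_min_one_div_rpow_mul (μ := μ) hε hr
    (hv.abs.rpow_const fun _ ↦ .inr hp.le) c
  have hwd := integrableOn_min_one_div_rpow (μ := μ) hr (neg_lt_neg hεn) c
  simp only [← hdual] at hwd
  refine (integral_abs_rpow_le_of_weight hq hqp (Measure.ae_smul_measure hw _)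
    (Measurable.aemeasurable (by fun_prop)) hv.measurable.aemeasurable
    (Integrable.to_average hwv) (Integrable.to_average hwd)).trans ?_
  simp only [hdual]
  exact mul_le_mul_of_nonneg_left
    (Real.rpow_le_rpow (integral_nonneg fun x ↦ by positivity)
      (setAverage_ball_min_one_div_rpow_le hr (neg_lt_neg hεn) c)
      (sub_nonneg.2 ((div_le_one hp).2 hqp.le)))
    (Real.rpow_nonneg (integral_nonneg fun x ↦ by positivity) _)

theorem rpow_setAverage_ball_abs_rpow_le_of_weight (hq : 0 < q) (hqp : q < p) (hr : 0 < r)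
    (hε : 0 ≤ ε) (hεn : ε * (q / (p - q)) < Module.finrank ℝ E) (hv : Continuous v) (c : E) :
    (⨍ x in ball c r, |v x| ^ q ∂μ) ^ (1 / q) ≤
      (⨍ x in ball c r, min 1 (‖x‖ / r) ^ ε * |v x| ^ p ∂μ) ^ (1 / p) *
        (1 + Module.finrank ℝ E / (Module.finrank ℝ E - ε * (q / (p - q)))) ^
          (1 / q - 1 / p) := by
  have hp : 0 < p := hq.trans hqp
  have hn : (0 : ℝ) ≤ 1 + Module.finrank ℝ E / (Module.finrank ℝ E - ε * (q / (p - q))) := by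
    have := sub_pos.2 hεn
    positivity
  have havg : 0 ≤ ⨍ x in ball c r, min 1 (‖x‖ / r) ^ ε * |v x| ^ p ∂μ :=
    integral_nonneg fun x ↦ by positivity
  refine (Real.rpow_le_rpow (integral_nonneg fun x ↦ by positivity)
    (setAverage_ball_abs_rpow_le_of_weight hq hqp hr hε hεn hv c) (by positivity)).trans_eq ?_
  rw [Real.mul_rpow (by positivity) (by positivity), ← Real.rpow_mul havg, ← Real.rpow_mul hn]
  congr 2 <;> field_simp

end LocalAverage

section LocalImprovement

variable {E : Type*} [NormedAddCommGroup E] [NormedSpace ℝ E] [FiniteDimensional ℝ E]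
  [Nontrivial E] [MeasurableSpace E] [BorelSpace E] {μ : Measure E} [μ.IsAddHaarMeasure]
  {H p q r δ R : ℝ} {u : E → ℝ}

lemma pow_mul_hardyX_mul_setAverage_ball_weight_le (hδ : 0 < δ) (hr : 0 < r) (hrR : r ≤ R)
    (hp : 2 ≤ p) (hH : 0 < H) (hHp : p * H = p - Module.finrank ℝ E) (hu : ContDiff ℝ 1 u)
    (hu0 : (0 : E) ∉ tsupport u) (huR : tsupport u ⊆ closedBall 0 R) (c : E) :
    r ^ Module.finrank ℝ E * hardyX (r / R) *
        ⨍ x in ball c r, min 1 (‖x‖ / r) ^ (2 * δ) * (|u x| ^ p / ‖x‖ ^ p) ∂μ ≤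
      p * (1 + δ⁻¹) ^ 2 / (H ^ (p - 2) * μ.real (ball 0 1)) * ∫ x, hardyDensity H p u x ∂μ := by
  have hR : 0 < R := hr.trans_le hrR
  have hrX : 0 < hardyX (r / R) := hardyX_pos (by positivity) (div_le_one_of_le₀ hrR hR.le)
  have hball : 0 < μ.real (ball (0 : E) 1) :=
    ENNReal.toReal_pos (measure_ball_pos μ 0 one_pos).ne' measure_ball_lt_top.ne
  rw [setAverage_eq, measureReal_ball_eq_mul_pow hr.le, smul_eq_mul]
  calc r ^ Module.finrank ℝ E * hardyX (r / R) * ((μ.real (ball 0 1) * r ^ Module.finrank ℝ E)⁻¹ *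
        ∫ x in ball c r, min 1 (‖x‖ / r) ^ (2 * δ) * (|u x| ^ p / ‖x‖ ^ p) ∂μ)
      = hardyX (r / R) / μ.real (ball (0 : E) 1) *
        ∫ x in ball c r, min 1 (‖x‖ / r) ^ (2 * δ) * (|u x| ^ p / ‖x‖ ^ p) ∂μ := by field_simp
    _ ≤ hardyX (r / R) / μ.real (ball (0 : E) 1) * (p * (1 + δ⁻¹) ^ 2 /
        (H ^ (p - 2) * hardyX (r / R)) * ∫ x, hardyDensity H p u x ∂μ) := by
      gcongr
      exact setIntegral_ball_weight_le hδ hr hrR hp hH hHp hu hu0 huR c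
    _ = _ := by field_simp

lemma rpow_setAverage_ball_abs_rpow_div_norm_rpow_le (hq : 0 < q) (hqp : q < p) (hr : 0 < r)
    (hu : Continuous u) (hu0 : (0 : E) ∉ tsupport u) (c : E) :
    (⨍ x in ball c r, |u x| ^ q / ‖x‖ ^ q ∂μ) ^ (1 / q) ≤
      (⨍ x in ball c r, min 1 (‖x‖ / r) ^ (2 * ((p - q) / (4 * q))) *
        (|u x| ^ p / ‖x‖ ^ p) ∂μ) ^ (1 / p) *
          (1 + Module.finrank ℝ E / (Module.finrank ℝ E - 1 / 2)) ^ (1 / q - 1 / p) := by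
  have hpq : 0 < p - q := sub_pos.2 hqp
  have hn : (1 : ℝ) ≤ Module.finrank ℝ E := mod_cast Module.finrank_pos (R := ℝ) (M := E)
  have hdual : 2 * ((p - q) / (4 * q)) * (q / (p - q)) = 1 / 2 := by
    field_simp
    norm_num
  have hv : Continuous fun x ↦ |u x| / ‖x‖ := by
    simpa using continuous_abs_rpow_div_norm_rpow one_pos hu hu0
  have habs (a : ℝ) (x : E) : |(|u x| / ‖x‖)| ^ a = |u x| ^ a / ‖x‖ ^ a := by
    rw [abs_of_nonneg (by positivity), Real.div_rpow (abs_nonneg _) (norm_nonneg _)]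
  have hholder := rpow_setAverage_ball_abs_rpow_le_of_weight (μ := μ)
    (ε := 2 * ((p - q) / (4 * q))) hq hqp hr (by positivity) (by rw [hdual]; linarith) hv c
  simpa only [habs, hdual] using hholder

/-- The constant `C` of the local improvement in dimension `n`, where `ω` is the measure of the unit
ball. It comes from the weight `min(1, |x| / r) ^ ((p - q) / (2q))`, whose dual weight in Hölder's
inequality is `min(1, |x| / r) ^ (-1 / 2)`. -/
noncomputable def localHardyConst (H p q n ω : ℝ) : ℝ :=
  (p * (1 + 4 * q / (p - q)) ^ 2 / (H ^ (p - 2) * ω)) ^ (1 / p) *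
    (1 + n / (n - 1 / 2)) ^ (1 / q - 1 / p)

lemma localHardyConst_pos {n ω : ℝ} (hq : 0 < q) (hqp : q < p) (hH : 0 < H) (hn : 1 ≤ n)
    (hω : 0 < ω) : 0 < localHardyConst H p q n ω := by
  have hp : 0 < p := hq.trans hqp
  have hn' : 0 < n - 1 / 2 := by linarith
  unfold localHardyConst
  positivity

theorem rpow_mul_hardyX_rpow_mul_rpow_setAverage_ball_le (hq : 0 < q) (hqp : q < p) (hr : 0 < r)
    (hrR : r ≤ R) (hp : 2 ≤ p) (hH : 0 < H) (hHp : p * H = p - Module.finrank ℝ E)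
    (hu : ContDiff ℝ 1 u) (hu0 : (0 : E) ∉ tsupport u) (huR : tsupport u ⊆ closedBall 0 R)
    (c : E) :
    r ^ (Module.finrank ℝ E / p) * hardyX (r / R) ^ (1 / p) *
        (⨍ x in ball c r, |u x| ^ q / ‖x‖ ^ q ∂μ) ^ (1 / q) ≤
      localHardyConst H p q (Module.finrank ℝ E) (μ.real (ball 0 1)) *
        (∫ x, hardyDensity H p u x ∂μ) ^ (1 / p) := by
  have hR : 0 < R := hr.trans_le hrR
  have hn : (1 : ℝ) ≤ Module.finrank ℝ E := mod_cast Module.finrank_pos (R := ℝ) (M := E)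
  have hrX : 0 < hardyX (r / R) := hardyX_pos (by positivity) (div_le_one_of_le₀ hrR hR.le)
  have hweight := pow_mul_hardyX_mul_setAverage_ball_weight_le (μ := μ) (δ := (p - q) / (4 * q))
    (by positivity) hr hrR hp hH hHp hu hu0 huR c
  have hholder := rpow_setAverage_ball_abs_rpow_div_norm_rpow_le (μ := μ) hq hqp hr
    hu.continuous hu0 c
  rw [inv_div] at hweight
  set A := ⨍ x in ball c r, min 1 (‖x‖ / r) ^ (2 * ((p - q) / (4 * q))) * (|u x| ^ p / ‖x‖ ^ p) ∂μ
  have hA : 0 ≤ A := integral_nonneg fun x ↦ by positivity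
  set K : ℝ := (1 + Module.finrank ℝ E / (Module.finrank ℝ E - 1 / 2)) ^ (1 / q - 1 / p) with hK
  have hK0 : 0 ≤ K := Real.rpow_nonneg (add_nonneg zero_le_one
    (div_nonneg (by linarith) (by linarith))) _
  calc r ^ (Module.finrank ℝ E / p) * hardyX (r / R) ^ (1 / p) *
        (⨍ x in ball c r, |u x| ^ q / ‖x‖ ^ q ∂μ) ^ (1 / q)
      ≤ r ^ (Module.finrank ℝ E / p) * hardyX (r / R) ^ (1 / p) * (A ^ (1 / p) * K) := by gcongr
    _ = (r ^ Module.finrank ℝ E * hardyX (r / R) * A) ^ (1 / p) * K := by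
      rw [Real.mul_rpow (by positivity) hA, Real.mul_rpow (by positivity) hrX.le,
        ← Real.rpow_natCast, ← Real.rpow_mul hr.le, mul_one_div]
      ring
    _ ≤ (p * (1 + 4 * q / (p - q)) ^ 2 / (H ^ (p - 2) * μ.real (ball 0 1)) *
          ∫ x, hardyDensity H p u x ∂μ) ^ (1 / p) * K := by gcongr
    _ = _ := by
      rw [Real.mul_rpow (by positivity) (integral_hardyDensity_nonneg hp hH hHp hR hu hu0 huR),
        localHardyConst, hK]
      ring

theorem hardy_local_improvement_general (hp : 2 ≤ p) (hnp : Module.finrank ℝ E < p) (hq : 0 < q)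
    (hqp : q < p) :
    ∃ C : ℝ, 0 < C ∧ ∀ Ω : Set E, Bornology.IsBounded Ω → 0 ∈ Ω →
      ∀ u : E → ℝ, ContDiff ℝ 1 u → tsupport u ⊆ Ω \ {0} →
        ∀ (c : E) (r D : ℝ), 0 < r → r ≤ D → diam Ω ≤ D →
          r ^ (Module.finrank ℝ E / p) * hardyX (r / D) ^ (1 / p) *
              (⨍ x in ball c r, |u x| ^ q / ‖x‖ ^ q ∂μ) ^ (1 / q) ≤
            C * ((∫ x in Ω, ‖fderiv ℝ u x‖ ^ p ∂μ) - ((p - Module.finrank ℝ E) / p) ^ p *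
              ∫ x in Ω, |u x| ^ p / ‖x‖ ^ p ∂μ) ^ (1 / p) := by
  have hp0 : 0 < p := by linarith
  have hH : 0 < (p - Module.finrank ℝ E) / p := div_pos (sub_pos.2 hnp) hp0
  refine ⟨localHardyConst ((p - Module.finrank ℝ E) / p) p q (Module.finrank ℝ E)
    (μ.real (ball 0 1)), localHardyConst_pos hq hqp hH
      (mod_cast Module.finrank_pos (R := ℝ) (M := E))
      (ENNReal.toReal_pos (measure_ball_pos μ 0 one_pos).ne' measure_ball_lt_top.ne), ?_⟩
  intro Ω hΩ h0 u hu huΩ c r D hr hrD hD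
  have huD : tsupport u ⊆ closedBall 0 D := fun x hx ↦
    mem_closedBall.2 ((dist_le_diam_of_mem hΩ (huΩ hx).1 h0).trans hD)
  have huc : HasCompactSupport u :=
    (isCompact_closedBall 0 D).of_isClosed_subset (isClosed_tsupport u) huD
  have hu0 : (0 : E) ∉ tsupport u := fun h ↦ (huΩ h).2 rfl
  rw [← integral_hardyDensity_eq_setIntegral_sub hp0 hu hu0 huc (huΩ.trans sdiff_subset)]
  exact rpow_mul_hardyX_rpow_mul_rpow_setAverage_ball_le hq hqp hr hrD hp hH
    (mul_div_cancel₀ _ hp0.ne') hu hu0 huD c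

end LocalImprovement

/-- local logarithmic improvement of the Hardy inequality, `p > n`. -/
theorem hardy_local_improvement (n : ℕ) (hn : 2 ≤ n) (p q : ℝ)
    (hp : (n : ℝ) < p) (hq1 : 1 ≤ q) (hqp : q < p) :
    ∃ Θ C : ℝ, 0 ≤ Θ ∧ 0 < C ∧
      ∀ Ω : Set (EuclideanSpace ℝ (Fin n)), IsOpen Ω → IsConnected Ω →
        Bornology.IsBounded Ω → (0 : EuclideanSpace ℝ (Fin n)) ∈ Ω →
        ∀ u : EuclideanSpace ℝ (Fin n) → ℝ, ContDiff ℝ (⊤ : ℕ∞) u →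
          HasCompactSupport u → tsupport u ⊆ Ω \ {0} →
          ∀ (c : EuclideanSpace ℝ (Fin n)) (r : ℝ), 0 < r → r < Metric.diam Ω →
          ∀ D : ℝ, Real.exp Θ * Metric.diam Ω ≤ D →
            r ^ ((n : ℝ) / p) * ((1 - Real.log (r / D))⁻¹) ^ (1 / p) *
              ((1 / ((volume (Metric.ball (0 : EuclideanSpace ℝ (Fin n)) 1)).toReal * r ^ (n : ℕ))) *
                ∫ x in Metric.ball c r, |u x| ^ q / ‖x‖ ^ q) ^ (1 / q) ≤
              C * ((∫ x in Ω, ‖fderiv ℝ u x‖ ^ p)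
                - ((p - n) / p) ^ p * ∫ x in Ω, |u x| ^ p / ‖x‖ ^ p) ^ (1 / p) := by
  have : Nontrivial (Fin n) := Fin.nontrivial_iff_two_le.2 hn
  have hp2 : (2 : ℝ) ≤ p := (Nat.ofNat_le_cast.2 hn).trans hp.le
  obtain ⟨C, hC, h⟩ := hardy_local_improvement_general (E := EuclideanSpace ℝ (Fin n))
    (μ := volume) hp2 (by simpa using hp) (zero_lt_one.trans_le hq1) hqp
  refine ⟨0, C, le_rfl, hC, fun Ω _ _ hΩ h0 u hu _ huΩ c r hr hrΩ D hD ↦ ?_⟩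
  rw [Real.exp_zero, one_mul] at hD
  simpa [hardyX, setAverage_eq, measureReal_ball_eq_mul_pow hr.le, measureReal_def] using
    h Ω hΩ h0 u (hu.of_le (by simp)) huΩ c r D hr (hrΩ.le.trans hD) hD
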